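/- Concentration of the signed occurrence profile: fix a positive rational c, set λ = 3c, and let n range over positive integers with c·n ∈ ℕ. Fix integers 0 ≤ p ≤ x and a real ε > 0. Then the probability that a uniformly random formula F : Fin (c·n) → (Fin n × Bool)³ satisfies |ω_{x,p}(F) − κ_{x,p}| > ε tends to 0 as n → ∞ (along the integers n with c·n ∈ ℕ). -/

import Mathlib

open Filter

/-- `κ_{x,p} = 2^{-x} (x choose p) e^{-λ} λ^x / x!`. -/
noncomputable def kappa (lam : ℝ) (x p : ℕ) : ℝ :=
  (2 : ℝ) ^ (-(x : ℝ)) * (Nat.choose x p : ℝ) *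
    (Real.exp (-lam) * lam ^ x / (Nat.factorial x : ℝ))

/-- Number of occurrences of the variable `v` in the formula `F`. -/
noncomputable def numOccs {n m : ℕ} (F : Fin m → Fin 3 → Fin n × Bool) (v : Fin n) : ℕ :=
  Nat.card {ij : Fin m × Fin 3 // (F ij.1 ij.2).1 = v}

/-- Number of positive occurrences of the variable `v` in the formula `F`. -/
noncomputable def numPosOccs {n m : ℕ} (F : Fin m → Fin 3 → Fin n × Bool) (v : Fin n) : ℕ :=
  Nat.card {ij : Fin m × Fin 3 // F ij.1 ij.2 = (v, true)}

/-- `ω_{x,p}(F)`: the proportion (among the `n` variables) of variables having `x`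
occurrences in `F`, `p` of them positive. -/
noncomputable def omegaProp (n m x p : ℕ) (F : Fin m → Fin 3 → Fin n × Bool) : ℝ :=
  (Nat.card {v : Fin n // numOccs F v = x ∧ numPosOccs F v = p} : ℝ) / (n : ℝ)


section
variable {ι J α : Type*} [Fintype ι] [DecidableEq ι] [Fintype J] [DecidableEq J] [Fintype α] [DecidableEq α]

def Mcount (ι : Type*) {J : Type*} [Fintype ι] [DecidableEq ι] [Fintype J] [DecidableEq J] (k : J → ℕ) : ℕ :=
  (Finset.univ.filter fun t : ι → Option J => ∀ j, (Finset.univ.filter fun i => t i = some j).card = k j).card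

theorem count_eq (a : J → α) (ha : Function.Injective a) (k : J → ℕ) :
    (Finset.univ.filter fun G : ι → α => ∀ j, (Finset.univ.filter fun i => G i = a j).card = k j).card
     = Mcount ι k * (Fintype.card α - Fintype.card J) ^ (Fintype.card ι - ∑ j, k j) := by
  classical
  have hφ := ha.isPartialInv
  set φ := Function.partialInv a with hφdef
  have hs : ∀ b j, φ b = some j ↔ b = a j := fun b j => by rw [hφ j b]; exact eq_comm
  have hc1 : ∀ j, (Finset.univ.filter fun b => φ b = some j).card = 1 := by
    intro j
    rw [Finset.card_eq_one]
    exact ⟨a j, by ext b; simp [hs]⟩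
  have hcn : (Finset.univ.filter fun b => φ b = none).card = Fintype.card α - Fintype.card J := by
    have h1 : (Finset.univ.filter fun b => φ b = none) = (Finset.univ.image a)ᶜ := by
      ext b
      simp only [Finset.mem_filter, Finset.mem_univ, true_and, Finset.mem_compl, Finset.mem_image, not_exists]
      rw [Option.eq_none_iff_forall_ne_some]
      exact forall_congr' fun j => by rw [Ne, hs, eq_comm]
    rw [h1, Finset.card_compl, Finset.card_image_of_injective _ ha, Finset.card_univ]
  rw [Finset.card_eq_sum_card_fiberwise (f := fun G i => φ (G i))
    (t := Finset.univ.filter fun t : ι → Option J => ∀ j, (Finset.univ.filter fun i => t i = some j).card = k j)]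
  · rw [Finset.sum_const_nat (m := (Fintype.card α - Fintype.card J) ^ (Fintype.card ι - ∑ j, k j))]
    · rfl
    intro t ht
    simp only [Finset.mem_filter, Finset.mem_univ, true_and] at ht
    have h2 : ((Finset.univ.filter fun G : ι → α => ∀ j, (Finset.univ.filter fun i => G i = a j).card = k j).filter
        fun G => (fun i => φ (G i)) = t) = Fintype.piFinset (fun i => Finset.univ.filter fun b => φ b = t i) := by
      ext G
      simp only [Finset.mem_filter, Finset.mem_univ, true_and, Fintype.mem_piFinset, funext_iff]
      constructor
      · exact fun h => h.2
      · intro h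
        refine ⟨fun j => ?_, h⟩
        rw [← ht j]
        congr 1
        ext i
        simp [← h i, hs]
    rw [h2, Fintype.card_piFinset]
    have h3 : ∀ i, (Finset.univ.filter fun b => φ b = t i).card =
        if t i = none then Fintype.card α - Fintype.card J else 1 := by
      intro i
      cases h : t i with
      | none => simp [hcn]
      | some j => simp [hc1]
    rw [Finset.prod_congr rfl (fun i _ => h3 i), Finset.prod_ite, Finset.prod_const, Finset.prod_const_one, mul_one]
    congr 1
    have h4 : Fintype.card ι = ∑ o : Option J, (Finset.univ.filter fun i => t i = o).card := by
      rw [← Finset.card_univ]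
      exact Finset.card_eq_sum_card_fiberwise (fun _ _ => by simp)
    have h6 : ∑ j, (Finset.univ.filter fun i => t i = some j).card = ∑ j, k j :=
      Finset.sum_congr rfl (fun j _ => ht j)
    rw [Fintype.sum_option, h6] at h4
    omega
  · intro G hG
    simpa [hs] using hG

theorem Mcount_le (k : J → ℕ) : Mcount ι k ≤ ∏ j, (Fintype.card ι).choose (k j) := by
  classical
  have : (Fintype.piFinset fun j => (Finset.univ : Finset ι).powersetCard (k j)).card = ∏ j, (Fintype.card ι).choose (k j) := by
    simp
  rw [← this]
  refine Finset.card_le_card_of_injOn (fun t j => Finset.univ.filter fun i => t i = some j) ?_ ?_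
  · intro t ht
    simpa [Finset.mem_powersetCard] using ht
  · intro t _ s _ h
    funext i
    ext j
    have := congrArg (fun A => i ∈ A) (congrFun h j)
    simpa using this

theorem le_Mcount (p q : ℕ) :
    (Fintype.card ι).choose p * (Fintype.card ι - p).choose q ≤ Mcount ι (fun b : Bool => if b then p else q) := by
  classical
  have : (((Finset.univ : Finset ι).powersetCard p).sigma fun A => (Aᶜ).powersetCard q).card
      = (Fintype.card ι).choose p * (Fintype.card ι - p).choose q := by
    rw [Finset.card_sigma, Finset.sum_const_nat (m := (Fintype.card ι - p).choose q)]
    · simp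
    · intro A hA
      rw [Finset.mem_powersetCard] at hA
      rw [Finset.card_powersetCard, Finset.card_compl, hA.2]
  rw [← this]
  refine Finset.card_le_card_of_injOn (fun s i => if i ∈ s.1 then some true else if i ∈ s.2 then some false else none) ?_ ?_
  · rintro ⟨A, B⟩ h
    simp only [Finset.coe_sigma, Set.mem_sigma_iff, Finset.mem_coe, Finset.mem_powersetCard] at h
    obtain ⟨⟨_, hA⟩, hB, hBq⟩ := h
    simp only [Finset.coe_filter, Set.mem_ofPred_eq, Finset.mem_univ, true_and, Bool.forall_bool]
    constructor
    · rw [if_neg (by simp), ← hBq]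
      congr 1
      ext i
      have := @hB i
      simp only [Finset.mem_compl] at this
      simp only [Finset.mem_filter, Finset.mem_univ, true_and]
      split_ifs <;> simp_all
    · rw [if_pos trivial, ← hA]
      congr 1
      ext i
      simp only [Finset.mem_filter, Finset.mem_univ, true_and]
      split_ifs <;> simp_all
  · rintro ⟨A, B⟩ h ⟨A', B'⟩ h' he
    simp only [Finset.coe_sigma, Set.mem_sigma_iff, Finset.mem_coe, Finset.mem_powersetCard] at h h'
    have hA : A = A' := by
      ext i
      have := congrFun he i
      simp only at this
      split_ifs at this <;> simp_all
    subst hA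
    have hB : B = B' := by
      ext i
      have := congrFun he i
      have h1 := @h.2.1 i
      have h2 := @h'.2.1 i
      simp only [Finset.mem_compl] at this h1 h2
      split_ifs at this <;> simp_all
    rw [hB]
end

theorem choose_tendsto {l : Filter ℕ} (f : ℕ → ℕ) (L : ℝ) (hl : Tendsto (fun n : ℕ => (n:ℝ)) l atTop)
    (hf : Tendsto (fun n => (f n : ℝ) / n) l (nhds L)) (k : ℕ) :
    Tendsto (fun n => ((f n).choose k : ℝ) / (n:ℝ) ^ k) l (nhds (L ^ k / k.factorial)) := by
  induction k with
  | zero => simpa using tendsto_const_nhds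
  | succ k ih =>
    have h1 : Tendsto (fun n : ℕ => (k : ℝ) / n) l (nhds 0) := tendsto_const_nhds.div_atTop hl
    have h2 := (ih.mul (hf.sub h1)).div_const ((k:ℝ)+1)
    have e : L ^ k / k.factorial * (L - 0) / ((k:ℝ)+1) = L ^ (k+1) / (k+1).factorial := by
      rw [Nat.factorial_succ]; push_cast
      have : (k.factorial : ℝ) ≠ 0 := by positivity
      have : (k : ℝ) + 1 ≠ 0 := by positivity
      field_simp; ring
    rw [e] at h2
    refine h2.congr' ?_
    filter_upwards [hl.eventually_gt_atTop 0] with n hn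
    have h3 : ((f n).choose (k+1) : ℝ) * (k+1) = (f n).choose k * ((f n : ℝ) - k) := by
      have := Nat.choose_succ_right_eq (f n) k
      rcases le_or_gt k (f n) with h | h
      · rw [← Nat.cast_sub h]; exact_mod_cast this
      · rw [Nat.choose_eq_zero_of_lt h, Nat.choose_eq_zero_of_lt (by omega)]; simp
    have : (k : ℝ) + 1 ≠ 0 := by positivity
    have h4 : ((f n).choose (k+1) : ℝ) = (f n).choose k * ((f n : ℝ) - k) / (k+1) := by
      rw [← h3]; field_simp
    rw [h4]
    field_simp
    ring

theorem pow_tendsto {l : Filter ℕ} (hle : l ≤ atTop) (N : ℕ → ℕ) (L t : ℝ) (y : ℕ)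
    (hN : ∀ᶠ n : ℕ in l, (N n : ℝ) = L * n) (hL : 0 < L) :
    Tendsto (fun n : ℕ => (1 + t / (n:ℝ)) ^ (N n - y)) l (nhds (Real.exp (t * L))) := by
  have hl : Tendsto (fun n : ℕ => (n:ℝ)) l atTop := tendsto_natCast_atTop_atTop.mono_left hle
  have h0 : Tendsto (fun n : ℕ => 1 + t / (n:ℝ)) l (nhds 1) := by
    simpa using (tendsto_const_nhds (x := (1:ℝ))).add ((tendsto_const_nhds (x := t)).div_atTop hl)
  have h1 := (Real.tendsto_one_add_div_pow_exp t).mono_left hle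
  have h2 := (h1.rpow_const (p := L) (Or.inr hL.le)).div (h0.pow y) (by simp)
  rw [one_pow, div_one, ← Real.exp_mul] at h2
  refine h2.congr' ?_
  have hNy : Tendsto (fun n : ℕ => L * (n:ℝ)) l atTop := hl.const_mul_atTop hL
  filter_upwards [hN, h0.eventually (lt_mem_nhds one_pos), hNy.eventually_ge_atTop (y:ℝ)] with n hn hpos hy
  have : y ≤ N n := by rw [← hn] at hy; exact_mod_cast hy
  rw [pow_sub₀ _ hpos.ne' this, Pi.div_apply, div_eq_mul_inv]
  congr 1
  rw [← Real.rpow_natCast, ← Real.rpow_natCast, ← Real.rpow_mul hpos.le, hn, mul_comm]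

section
variable {n m : ℕ}

theorem ev_iff {x p : ℕ} (hpx : p ≤ x) (F : Fin m → Fin 3 → Fin n × Bool) (v : Fin n) :
    (numOccs F v = x ∧ numPosOccs F v = p) ↔
     ∀ s : Bool, (Finset.univ.filter fun i : Fin m × Fin 3 => F i.1 i.2 = (v, s)).card = if s then p else x - p := by
  have h1 : numPosOccs F v = (Finset.univ.filter fun i : Fin m × Fin 3 => F i.1 i.2 = (v, true)).card := by
    rw [numPosOccs, Nat.card_eq_fintype_card, Fintype.card_subtype]
  have h2 : numOccs F v = (Finset.univ.filter fun i : Fin m × Fin 3 => F i.1 i.2 = (v, true)).card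
      + (Finset.univ.filter fun i : Fin m × Fin 3 => F i.1 i.2 = (v, false)).card := by
    rw [numOccs, Nat.card_eq_fintype_card, Fintype.card_subtype, ← Finset.card_union_of_disjoint]
    · congr 1
      ext i
      simp only [Finset.mem_filter, Finset.mem_univ, true_and, Finset.mem_union, Prod.ext_iff]
      cases (F i.1 i.2).2 <;> simp
    · rw [Finset.disjoint_left]
      intro i hi
      simp only [Finset.mem_filter, Finset.mem_univ, true_and] at hi ⊢
      simp [hi]
  rw [h1, h2, Bool.forall_bool]
  simp only [if_true, Bool.false_eq_true, if_false]
  omega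

theorem single_ge {x p : ℕ} (hpx : p ≤ x) (v : Fin n) :
    (3 * m).choose p * (3 * m - p).choose (x - p) * (2 * n - 2) ^ (3 * m - x) ≤
    (Finset.univ.filter fun F : Fin m → Fin 3 → Fin n × Bool => numOccs F v = x ∧ numPosOccs F v = p).card := by
  have h := count_eq (ι := Fin m × Fin 3) (fun s : Bool => (v, s)) (fun s t h => by simpa using h)
    (fun b : Bool => if b then p else x - p)
  have h2 := le_Mcount (ι := Fin m × Fin 3) p (x - p)
  have h3 : (Finset.univ.filter fun F : Fin m → Fin 3 → Fin n × Bool => numOccs F v = x ∧ numPosOccs F v = p).card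
     = (Finset.univ.filter fun G : Fin m × Fin 3 → Fin n × Bool =>
        ∀ s : Bool, (Finset.univ.filter fun i => G i = (v, s)).card = if s then p else x - p).card := by
    refine Finset.card_equiv (Equiv.curry _ _ _).symm ?_
    intro F
    simp only [Finset.mem_filter, Finset.mem_univ, true_and, ev_iff hpx]
    rfl
  rw [h3.trans (Eq.trans (by congr!) h)]
  have e1 : Fintype.card (Fin m × Fin 3) = 3 * m := by simp [mul_comm]
  have e2 : Fintype.card (Fin n × Bool) = 2 * n := by simp [mul_comm]
  have e3 : ∑ b : Bool, (if b then p else x - p) = x := by simp; omega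
  rw [e1] at h2 ⊢
  rw [e2, e3, Fintype.card_bool]
  exact Nat.mul_le_mul_right _ h2

theorem pair_le {x p : ℕ} (hpx : p ≤ x) (v w : Fin n) (hvw : v ≠ w) :
    (Finset.univ.filter fun F : Fin m → Fin 3 → Fin n × Bool => (numOccs F v = x ∧ numPosOccs F v = p)
      ∧ (numOccs F w = x ∧ numPosOccs F w = p)).card ≤
    ((3 * m).choose p * (3 * m).choose (x - p)) ^ 2 * (2 * n - 4) ^ (3 * m - 2 * x) := by
  have h := count_eq (ι := Fin m × Fin 3) (fun s : Bool × Bool => (if s.1 then v else w, s.2))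
    (fun s t h => by
      obtain ⟨s1, s2⟩ := s
      obtain ⟨t1, t2⟩ := t
      have := hvw.symm
      cases s1 <;> cases t1 <;> simp_all)
    (fun b : Bool × Bool => if b.2 then p else x - p)
  have h2 := Mcount_le (ι := Fin m × Fin 3) (fun b : Bool × Bool => if b.2 then p else x - p)
  have h3 : (Finset.univ.filter fun F : Fin m → Fin 3 → Fin n × Bool => (numOccs F v = x ∧ numPosOccs F v = p)
      ∧ (numOccs F w = x ∧ numPosOccs F w = p)).card
     = (Finset.univ.filter fun G : Fin m × Fin 3 → Fin n × Bool =>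
        ∀ s : Bool × Bool, (Finset.univ.filter fun i => G i = (if s.1 then v else w, s.2)).card = if s.2 then p else x - p).card := by
    refine Finset.card_equiv (Equiv.curry _ _ _).symm ?_
    intro F
    simp only [Finset.mem_filter, Finset.mem_univ, true_and, ev_iff hpx, Prod.forall]
    rw [Bool.forall_bool (p := fun a => ∀ b : Bool, _)]
    simp only [if_true, Bool.false_eq_true, if_false]
    rw [and_comm]
    rfl
  rw [h3, h]
  have e1 : Fintype.card (Fin m × Fin 3) = 3 * m := by simp [mul_comm]
  have e2 : Fintype.card (Fin n × Bool) = 2 * n := by simp [mul_comm]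
  have e3 : ∑ b : Bool × Bool, (if b.2 then p else x - p) = 2 * x := by
    simp [Fintype.sum_prod_type]; omega
  have e4 : ∏ b : Bool × Bool, (3 * m).choose (if b.2 then p else x - p) = ((3 * m).choose p * (3 * m).choose (x - p)) ^ 2 := by
    simp [Fintype.prod_prod_type, sq]
  rw [e1, e4] at h2
  rw [e1, e2, e3, Fintype.card_prod, Fintype.card_bool]
  exact Nat.mul_le_mul_right _ h2

open Classical in
theorem chebyshev {x p : ℕ} (hpx : p ≤ x) (hn : 0 < n) (K ε : ℝ) (hK : 0 ≤ K) (hε : 0 < ε) :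
    (Nat.card {F : Fin m → Fin 3 → Fin n × Bool // ε < |omegaProp n m x p F - K|} : ℝ) * ε ^ 2 ≤
    ((((3 * m).choose p * (3 * m).choose (x - p)) ^ 2 * (2 * n - 4) ^ (3 * m - 2 * x) : ℕ) : ℝ)
      + (2 * n) ^ (3 * m) / n
      - 2 * K * (((3 * m).choose p * (3 * m - p).choose (x - p) * (2 * n - 2) ^ (3 * m - x) : ℕ) : ℝ)
      + K ^ 2 * (2 * n) ^ (3 * m) := by
  set P2 : ℕ := ((3 * m).choose p * (3 * m).choose (x - p)) ^ 2 * (2 * n - 4) ^ (3 * m - 2 * x) with hP2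
  set P1 : ℕ := (3 * m).choose p * (3 * m - p).choose (x - p) * (2 * n - 2) ^ (3 * m - x) with hP1
  have hn' : (0:ℝ) < n := by exact_mod_cast hn
  let E : (Fin m → Fin 3 → Fin n × Bool) → Fin n → Prop := fun F v => numOccs F v = x ∧ numPosOccs F v = p
  have hcard : (Fintype.card (Fin m → Fin 3 → Fin n × Bool) : ℝ) = (2 * n) ^ (3 * m) := by
    simp only [Fintype.card_fun, Fintype.card_prod, Fintype.card_fin, Fintype.card_bool]
    push_cast
    rw [← pow_mul, mul_comm (n:ℝ)]
  have hom : ∀ F : Fin m → Fin 3 → Fin n × Bool, omegaProp n m x p F = (∑ v, if E F v then (1:ℝ) else 0) / n := by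
    intro F
    rw [omegaProp, Nat.card_eq_fintype_card, Fintype.card_subtype, Finset.sum_boole]
  have hS1 : (P1 : ℝ) ≤ ∑ F, omegaProp n m x p F := by
    simp only [hom]
    rw [← Finset.sum_div, Finset.sum_comm, le_div_iff₀ hn']
    have : ∀ v ∈ (Finset.univ : Finset (Fin n)), (P1:ℝ) ≤ ∑ F : Fin m → Fin 3 → Fin n × Bool, if E F v then (1:ℝ) else 0 := by
      intro v _
      rw [Finset.sum_boole]
      exact_mod_cast single_ge hpx v
    have := Finset.sum_le_sum this
    simpa [mul_comm] using this
  have hS2 : ∑ F, (omegaProp n m x p F) ^ 2 ≤ (P2 : ℝ) + (2 * n) ^ (3 * m) / n := by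
    simp only [hom, div_pow, sq (Finset.sum _ _), Finset.sum_mul_sum]
    rw [← Finset.sum_div, Finset.sum_comm, div_le_iff₀ (by positivity)]
    have : ∀ v ∈ (Finset.univ : Finset (Fin n)), (∑ F : Fin m → Fin 3 → Fin n × Bool, ∑ w, (if E F v then (1:ℝ) else 0) * (if E F w then (1:ℝ) else 0)) ≤ n * P2 + (2 * n) ^ (3 * m) := by
      intro v _
      rw [Finset.sum_comm]
      have : ∀ w ∈ (Finset.univ : Finset (Fin n)), (∑ F : Fin m → Fin 3 → Fin n × Bool, (if E F v then (1:ℝ) else 0) * (if E F w then (1:ℝ) else 0)) ≤ P2 + if v = w then (2 * (n:ℝ)) ^ (3 * m) else 0 := by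
        intro w _
        have e : ∀ F : Fin m → Fin 3 → Fin n × Bool, (if E F v then (1:ℝ) else 0) * (if E F w then (1:ℝ) else 0) = if E F v ∧ E F w then 1 else 0 := by
          intro F; by_cases h1 : E F v <;> by_cases h2 : E F w <;> simp [h1, h2]
        simp only [e]
        rw [Finset.sum_boole]
        split_ifs with hvw
        · rw [← hcard]
          have : ((Finset.univ.filter fun F : Fin m → Fin 3 → Fin n × Bool => E F v ∧ E F w).card : ℝ) ≤ Fintype.card (Fin m → Fin 3 → Fin n × Bool) := by
            exact_mod_cast Finset.card_le_univ _
          have h0 : (0:ℝ) ≤ P2 := by positivity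
          linarith
        · rw [add_zero]
          exact_mod_cast pair_le hpx v w hvw
      refine (Finset.sum_le_sum this).trans (le_of_eq ?_)
      simp [Finset.sum_add_distrib]
    refine (Finset.sum_le_sum this).trans (le_of_eq ?_)
    simp only [Finset.sum_const, Finset.card_univ, Fintype.card_fin, nsmul_eq_mul]
    field_simp
  have hmain : (Nat.card {F : Fin m → Fin 3 → Fin n × Bool // ε < |omegaProp n m x p F - K|} : ℝ) * ε ^ 2 ≤
      ∑ F, (omegaProp n m x p F - K) ^ 2 := by
    rw [Nat.card_eq_fintype_card, Fintype.card_subtype, ← nsmul_eq_mul, ← Finset.sum_const]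
    refine le_trans (Finset.sum_le_sum ?_) (Finset.sum_le_sum_of_subset_of_nonneg (Finset.filter_subset _ _) ?_)
    · intro F hF
      simp only [Finset.mem_filter, Finset.mem_univ, true_and] at hF
      rw [← sq_abs (_ - K)]
      gcongr
    · intros; positivity
  have hexp : ∑ F, (omegaProp n m x p F - K) ^ 2 = ∑ F, (omegaProp n m x p F) ^ 2 - 2 * K * ∑ F, omegaProp n m x p F + K ^ 2 * (2 * n) ^ (3 * m) := by
    rw [← hcard, Finset.mul_sum, ← Finset.sum_sub_distrib]
    have : K ^ 2 * (Fintype.card (Fin m → Fin 3 → Fin n × Bool) : ℝ) = ∑ F : Fin m → Fin 3 → Fin n × Bool, K ^ 2 := by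
      simp only [Finset.sum_const, Finset.card_univ, nsmul_eq_mul]; ring
    rw [this, ← Finset.sum_add_distrib]
    exact Finset.sum_congr rfl fun F _ => by ring
  have := mul_le_mul_of_nonneg_left hS1 (by positivity : 0 ≤ 2 * K)
  linarith
end

theorem kappa_eq (L : ℝ) (x p : ℕ) (hpx : p ≤ x) :
    kappa L x p = (L ^ p / p.factorial) * (L ^ (x - p) / (x - p).factorial) * (1 / 2) ^ x * Real.exp (-1 * L) := by
  rw [kappa, Nat.cast_choose ℝ hpx, Real.rpow_neg (by norm_num), Real.rpow_natCast, neg_one_mul, one_div, inv_pow]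
  have e : L ^ x = L ^ p * L ^ (x - p) := by rw [← pow_add]; congr 1; omega
  rw [e]
  have := Nat.cast_ne_zero (R := ℝ).2 x.factorial_ne_zero
  field_simp

/-- concentration of the signed occurrence profile.  For a positive
rational `c`, `λ = 3c`, fixed `0 ≤ p ≤ x` and `ε > 0`, the probability that a uniformly
random formula with `c·n` clauses on `n` variables has `|ω_{x,p} − κ_{x,p}| > ε`
tends to `0` as `n → ∞` along the integers `n` with `c·n ∈ ℕ`. -/
theorem omega_concentration (c : ℚ) (hc : 0 < c) (x p : ℕ) (hpx : p ≤ x)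
    (ε : ℝ) (hε : 0 < ε) :
    Tendsto (fun n : ℕ =>
        (Nat.card {F : Fin ((c * (n : ℚ)).num.toNat) → Fin 3 → Fin n × Bool //
            ε < |omegaProp n ((c * (n : ℚ)).num.toNat) x p F - kappa (3 * (c : ℝ)) x p|} : ℝ) /
          ((2 * (n : ℝ)) ^ (3 * (c * (n : ℚ)).num.toNat)))
      (atTop ⊓ 𝓟 {n : ℕ | (c * (n : ℚ)).den = 1}) (nhds 0) := by
  set l : Filter ℕ := atTop ⊓ 𝓟 {n : ℕ | (c * (n : ℚ)).den = 1} with hldef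
  have hle : l ≤ atTop := inf_le_left
  set M : ℕ → ℕ := fun n => (c * (n : ℚ)).num.toNat with hM
  set K := kappa (3 * (c : ℝ)) x p with hKdef
  set L : ℝ := 3 * (c : ℝ) with hL
  have hLpos : 0 < L := by have : (0:ℝ) < c := by exact_mod_cast hc
                           positivity
  have hl : Tendsto (fun n : ℕ => (n:ℝ)) l atTop := tendsto_natCast_atTop_atTop.mono_left hle
  have hN : ∀ᶠ n : ℕ in l, ((3 * M n : ℕ) : ℝ) = L * n := by
    have : ∀ᶠ n : ℕ in l, (c * (n : ℚ)).den = 1 := by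
      rw [hldef]; exact eventually_inf_principal.2 (Eventually.of_forall fun n h => h)
    filter_upwards [this] with n hn
    have h0 : 0 ≤ c * (n:ℚ) := by positivity
    have h1 : ((c * (n : ℚ)).num : ℚ) = c * n := Rat.coe_int_num_of_den_eq_one hn
    have h2 : ((M n : ℤ)) = (c * (n : ℚ)).num := Int.toNat_of_nonneg (Rat.num_nonneg.2 h0)
    have h3 : ((M n : ℕ) : ℚ) = c * n := by rw [← h1, ← h2]; simp
    have h4 : ((M n : ℕ) : ℝ) = c * n := by exact_mod_cast h3
    push_cast
    rw [h4, hL]; ring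
  have hNL : Tendsto (fun n : ℕ => ((3 * M n : ℕ) : ℝ) / n) l (nhds L) := by
    refine tendsto_const_nhds.congr' ?_
    filter_upwards [hN, hl.eventually_gt_atTop 0] with n h h0
    rw [h]; field_simp
  have hbig : ∀ y : ℕ, ∀ᶠ n : ℕ in l, y ≤ 3 * M n := by
    intro y
    filter_upwards [hN, (hl.const_mul_atTop hLpos).eventually_ge_atTop (y:ℝ)] with n h h0
    rw [← h] at h0; exact_mod_cast h0
  have hNL' : Tendsto (fun n : ℕ => ((3 * M n - p : ℕ) : ℝ) / n) l (nhds L) := by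
    have h1 : Tendsto (fun n : ℕ => (p : ℝ) / n) l (nhds 0) := tendsto_const_nhds.div_atTop hl
    have h2 := hNL.sub h1
    rw [sub_zero] at h2
    refine h2.congr' ?_
    filter_upwards [hbig p] with n h
    rw [Nat.cast_sub h, sub_div]
  have key : ∀ (y d : ℕ) (n A : ℕ), 0 < n → d ≤ n → y ≤ 3 * M n →
      ((A * (2 * n - 2 * d) ^ (3 * M n - y) : ℕ) : ℝ) / (2 * n) ^ (3 * M n) =
        (A : ℝ) / n ^ y * (1 / 2) ^ y * (1 + (-(d:ℝ)) / n) ^ (3 * M n - y) := by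
    intro y d n A hn hd hy
    have hn' : (0:ℝ) < n := by exact_mod_cast hn
    have e1 : ((2 * n - 2 * d : ℕ) : ℝ) = (2 * n) * (1 + (-(d:ℝ)) / n) := by
      rw [Nat.cast_sub (by omega)]; push_cast; field_simp; ring
    have e2 : (2 * (n:ℝ)) ^ (3 * M n) = (2 * n) ^ (3 * M n - y) * (2 * n) ^ y := by
      rw [← pow_add]; congr 1; omega
    rw [Nat.cast_mul, Nat.cast_pow, e1, e2, mul_pow, mul_pow 2 (n:ℝ) y, one_div, inv_pow]
    field_simp
  have hx : p + (x - p) = x := by omega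
  have T1 : Tendsto (fun n : ℕ => (((3 * M n).choose p * (3 * M n - p).choose (x - p) * (2 * n - 2) ^ (3 * M n - x) : ℕ) : ℝ) / (2 * n) ^ (3 * M n)) l (nhds K) := by
    have h := (((choose_tendsto _ L hl hNL p).mul (choose_tendsto _ L hl hNL' (x - p))).mul_const ((1 / 2 : ℝ) ^ x)).mul
      (pow_tendsto hle (fun n => 3 * M n) L (-1) x hN hLpos)
    rw [← kappa_eq L x p hpx] at h
    refine h.congr' ?_
    filter_upwards [hbig x, hle (eventually_ge_atTop 1)] with n h1 h2
    have := key x 1 n ((3 * M n).choose p * (3 * M n - p).choose (x - p)) (by omega) h2 h1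
    rw [mul_one] at this
    rw [this, div_mul_div_comm, ← pow_add, hx]
    push_cast
    rfl
  have T2 : Tendsto (fun n : ℕ => ((((3 * M n).choose p * (3 * M n).choose (x - p)) ^ 2 * (2 * n - 4) ^ (3 * M n - 2 * x) : ℕ) : ℝ) / (2 * n) ^ (3 * M n)) l (nhds (K ^ 2)) := by
    have h := ((((choose_tendsto _ L hl hNL p).mul (choose_tendsto _ L hl hNL (x - p))).pow 2).mul_const ((1 / 2 : ℝ) ^ (2 * x))).mul
      (pow_tendsto hle (fun n => 3 * M n) L (-2) (2 * x) hN hLpos)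
    have e : K ^ 2 = ((L ^ p / p.factorial) * (L ^ (x - p) / (x - p).factorial)) ^ 2 * (1 / 2) ^ (2 * x) * Real.exp (-2 * L) := by
      have : Real.exp (-2 * L) = Real.exp (-1 * L) ^ 2 := by
        rw [← Real.exp_nat_mul]; congr 1; push_cast; ring
      rw [hKdef, kappa_eq L x p hpx, this]; ring
    rw [← e] at h
    refine h.congr' ?_
    filter_upwards [hbig (2 * x), hle (eventually_ge_atTop 2)] with n h1 h2
    have := key (2 * x) 2 n (((3 * M n).choose p * (3 * M n).choose (x - p)) ^ 2) (by omega) h2 h1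
    rw [show 2 * 2 = 4 from rfl] at this
    rw [this, div_mul_div_comm, ← pow_add, hx, div_pow, ← pow_mul, mul_comm x 2]
    push_cast
    rfl
  have T3 : Tendsto (fun n : ℕ => (1:ℝ) / n) l (nhds 0) := tendsto_const_nhds.div_atTop hl
  have T := (((T2.add T3).sub (T1.const_mul (2 * K))).add_const (K ^ 2)).div_const (ε ^ 2)
  have e : (K ^ 2 + 0 - 2 * K * K + K ^ 2) / ε ^ 2 = 0 := by ring
  rw [e] at T
  refine tendsto_of_tendsto_of_tendsto_of_le_of_le' tendsto_const_nhds T ?_ ?_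
  · exact Eventually.of_forall fun n => by positivity
  · filter_upwards [hle (eventually_ge_atTop 1)] with n hn
    have hK : 0 ≤ K := by rw [hKdef, kappa_eq L x p hpx]; positivity
    have hn' : (0:ℝ) < n := by exact_mod_cast hn
    have h := chebyshev (m := M n) hpx hn K ε hK hε
    have hp : (0:ℝ) < (2 * n) ^ (3 * M n) := by positivity
    rw [le_div_iff₀ (by positivity), div_mul_eq_mul_div, div_le_iff₀ hp]
    refine h.trans (le_of_eq ?_)
    rw [add_mul, sub_mul, add_mul, div_mul_cancel₀ _ hp.ne', mul_assoc (2 * K), div_mul_cancel₀ _ hp.ne', div_mul_eq_mul_div, one_mul]
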